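/- arXiv:1703.01830 — 2 statements merged into one kernel-verified Lean document; each statement's English description precedes it below -/
import Mathlib

section
/- For every y ∈ (𝒫 ∪ 𝒜') \ E one has d(y, E) ≤ (n√r / 2 + 1) · max{d(y, 𝒫), d(y, 𝒜')}; consequently the condition number κ* := sup{ d(y,E) / max{d(y,𝒫), d(y,𝒜')} : y ∈ (𝒫 ∪ 𝒜') \ E } satisfies κ* ≤ n√r / 2 + 1. -/
open Finset

/-- A set function `g` on subsets of `V` is submodular. -/
def Submodular {V : Type*} [DecidableEq V] (g : Finset V → ℝ) : Prop :=
  ∀ X Y : Finset V, g X + g Y ≥ g (X ∪ Y) + g (X ∩ Y)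

/-- `x` belongs to the base polytope `B(g)` of the set function `g`. -/
def InBasePolytope {V : Type*} [Fintype V] (g : Finset V → ℝ) (x : V → ℝ) : Prop :=
  (∀ S : Finset V, ∑ v ∈ S, x v ≤ g S) ∧ (∑ v, x v = g Finset.univ)

/-- Euclidean norm of a finitely indexed real vector. -/
noncomputable def norm2 {ι : Type*} [Fintype ι] (x : ι → ℝ) : ℝ :=
  Real.sqrt (∑ i, x i ^ 2)

/-- Euclidean distance from a point to a set of vectors. -/
noncomputable def distSet {ι : Type*} [Fintype ι] (y : ι → ℝ) (K : Set (ι → ℝ)) : ℝ :=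
  sInf ((fun z => norm2 (y - z)) '' K)

lemma wirt_half (W : ℕ → ℝ) (h0 : W 0 = 0) (p : ℕ) :
    W p ^ 2 ≤ p * ∑ k ∈ range p, (W (k+1) - W k) ^ 2 ∧
    ∑ j ∈ range (p+1), W j ^ 2 ≤ (p * (p+1) / 2 : ℝ) * ∑ k ∈ range p, (W (k+1) - W k) ^ 2 ∧
    ∑ j ∈ range (p+1), W j ^ 2 - W p ^ 2 / 2 ≤ (p ^ 2 / 2 : ℝ) * ∑ k ∈ range p, (W (k+1) - W k) ^ 2 := by
  have A : ∀ p : ℕ, W p ^ 2 ≤ p * ∑ k ∈ range p, (W (k+1) - W k) ^ 2 := by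
    intro p
    have h1 : ∑ k ∈ range p, (W (k+1) - W k) = W p := by
      rw [Finset.sum_range_sub, h0, sub_zero]
    have h2 := sq_sum_le_card_mul_sum_sq (s := range p) (f := fun k => W (k+1) - W k)
    rw [h1] at h2
    simpa using h2
  refine ⟨A p, ?_, ?_⟩
  on_goal 2 =>
    induction p with
    | zero => simp [h0]
    | succ p ih =>
      rw [Finset.sum_range_succ]
      have h := A (p+1)
      have h' := A p
      rw [Finset.sum_range_succ _ p] at h
      rw [Finset.sum_range_succ (fun k => (W (k+1) - W k)^2) p]
      push_cast at h ⊢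
      have h3 := sq_nonneg (W (p+1) - W p)
      have h4 : (0:ℝ) ≤ p ^ 2 / 2 + p / 2 := by positivity
      nlinarith [mul_nonneg h4 h3]
  induction p with
  | zero => simp [h0]
  | succ p ih =>
    rw [Finset.sum_range_succ]
    have h := A (p+1)
    rw [Finset.sum_range_succ _ p] at h
    rw [Finset.sum_range_succ (fun k => (W (k+1) - W k)^2) p]
    push_cast at h ⊢
    have h3 := sq_nonneg (W (p+1) - W p)
    have h4 : (0:ℝ) ≤ (p * (p+1) / 2 : ℝ) := by positivity
    nlinarith [mul_nonneg h4 h3]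

lemma wirt (W : ℕ → ℝ) (n : ℕ) (h0 : W 0 = 0) (hn : W n = 0) :
    ∑ j ∈ range n, W j ^ 2 ≤ ((n:ℝ)^2 / 8) * ∑ k ∈ range n, (W (k+1) - W k) ^ 2 := by
  have key : ∀ p ≤ n, W (n-p) ^ 2 ≤ p * ∑ k ∈ range p, (W (n-p+k+1) - W (n-p+k)) ^ 2 ∧
    ∑ j ∈ range (p+1), W (n-p+j) ^ 2 ≤
      (p * (p+1) / 2 : ℝ) * ∑ k ∈ range p, (W (n-p+k+1) - W (n-p+k)) ^ 2 ∧
    ∑ j ∈ range (p+1), W (n-p+j) ^ 2 - W (n-p) ^ 2 / 2 ≤ (p ^ 2 / 2 : ℝ) * ∑ k ∈ range p, (W (n-p+k+1) - W (n-p+k)) ^ 2 := by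
    intro p hp
    have h := wirt_half (fun j => W (n-j)) (by simpa using hn) p
    have e1 : ∑ k ∈ range p, (W (n-(k+1)) - W (n-k)) ^ 2
        = ∑ k ∈ range p, (W (n-p+k+1) - W (n-p+k)) ^ 2 := by
      rw [← Finset.sum_range_reflect]
      refine Finset.sum_congr rfl fun k hk => ?_
      have := Finset.mem_range.1 hk
      rw [show n - (p-1-k+1) = n-p+k by omega, show n - (p-1-k) = n-p+k+1 by omega]
      ring
    have e2 : ∑ j ∈ range (p+1), W (n-j) ^ 2 = ∑ j ∈ range (p+1), W (n-p+j) ^ 2 := by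
      rw [← Finset.sum_range_reflect]
      refine Finset.sum_congr rfl fun k hk => ?_
      have := Finset.mem_range.1 hk
      rw [show n - (p+1-1-k) = n-p+k by omega]
    rw [e1, e2] at h
    exact h
  rcases Nat.even_or_odd' n with ⟨m, hm | hm⟩
  · obtain ⟨-, -, a2⟩ := wirt_half W h0 m
    obtain ⟨-, -, b2⟩ := key m (by omega)
    have hs : n - m = m := by omega
    rw [hs] at b2
    rw [Finset.sum_range_succ] at a2
    rw [Finset.sum_range_succ] at b2
    rw [show m + m = n by omega, hn] at b2
    rw [show n = m + m by omega, Finset.sum_range_add, Finset.sum_range_add]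
    push_cast
    nlinarith
  · obtain ⟨a1, a2, -⟩ := wirt_half W h0 m
    obtain ⟨b1, b2, -⟩ := key m (by omega)
    have hs : n - m = m + 1 := by omega
    rw [hs] at b1 b2
    rw [Finset.sum_range_succ] at b2
    rw [show m + 1 + m = n by omega, hn] at b2
    rw [show n = (m + 1) + m by omega, Finset.sum_range_add _ (m+1) m,
      Finset.sum_range_add _ (m+1) m, Finset.sum_range_succ (fun j => W j ^ 2) m]
    rw [Finset.sum_range_succ (fun k => (W (k+1) - W k)^2) m]
    push_cast
    have h1 : 0 ≤ ∑ k ∈ range m, (W (k+1) - W k) ^ 2 := Finset.sum_nonneg fun _ _ => sq_nonneg _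
    have h2 : 0 ≤ ∑ k ∈ range m, (W (m+1+k+1) - W (m+1+k)) ^ 2 :=
      Finset.sum_nonneg fun _ _ => sq_nonneg _
    have h3 := sq_nonneg (W (m+1) - W m)
    have h5 : (0:ℝ) ≤ (m + 1 + m)^2/8 := by positivity
    have h4 := mul_nonneg h5 h3
    rw [Finset.sum_range_succ] at a2
    nlinarith

/-- the ordering argument -/
lemma order_bound {V : Type*} [Fintype V] [DecidableEq V] {r n : ℕ} (e : Fin n ≃ V)
    (d : Fin r → V → ℝ) (hd : ∀ i, ∑ v, d i v = 0)
    (hneg : ∀ i, ∀ j : ℕ, ∑ v ∈ univ.filter (fun v => (e.symm v : ℕ) < j), d i v ≤ 0) :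
    ∑ i, ∑ v, d i v ^ 2 ≤ (n:ℝ)^2 / 4 * ∑ v, (∑ i, d i v) ^ 2 := by
  set D : Fin r → ℕ → ℝ := fun i j => ∑ v ∈ univ.filter (fun v => (e.symm v : ℕ) < j), d i v
    with hD
  have D0 : ∀ i, D i 0 = 0 := by intro i; simp [hD]
  have Dn : ∀ i, D i n = 0 := by intro i; simp [hD, hd]
  have Ds : ∀ i (k : Fin n), D i (k+1) - D i k = d i (e k) := by
    intro i k
    have : univ.filter (fun v => (e.symm v : ℕ) < k + 1) =
        insert (e k) (univ.filter (fun v => (e.symm v : ℕ) < k)) := by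
      ext v
      simp only [mem_filter, mem_univ, true_and, mem_insert]
      rw [← Equiv.symm_apply_eq, Fin.ext_iff]
      omega
    simp only [hD]
    rw [this, Finset.sum_insert (by simp)]
    ring
  have sumV : ∀ F : V → ℝ, ∑ v, F v = ∑ k : Fin n, F (e k) := fun F => (e.sum_comp F).symm
  have c1 : ∀ i, ∑ v, d i v ^ 2 = ∑ k ∈ range n, (D i (k+1) - D i k) ^ 2 := by
    intro i
    rw [sumV, ← Fin.sum_univ_eq_sum_range (fun k => (D i (k+1) - D i k) ^ 2)]
    exact Finset.sum_congr rfl fun k _ => by rw [Ds]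
  have c2 : ∑ v, (∑ i, d i v) ^ 2
      = ∑ k ∈ range n, ((∑ i, D i (k+1)) - (∑ i, D i k)) ^ 2 := by
    rw [sumV, ← Fin.sum_univ_eq_sum_range (fun k => ((∑ i, D i (k+1)) - (∑ i, D i k)) ^ 2)]
    refine Finset.sum_congr rfl fun k _ => ?_
    rw [← Finset.sum_sub_distrib]
    simp only [Ds]
  have c3 : ∀ i, ∑ v, d i v ^ 2 ≤ 2 * ∑ k ∈ range n, D i k ^ 2 := by
    intro i
    rw [c1]
    have s1 : ∑ k ∈ range n, D i (k+1) ^ 2 = ∑ k ∈ range n, D i k ^ 2 := by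
      have := Finset.sum_range_sub (fun k => D i k ^ 2) n
      rw [Finset.sum_sub_distrib, D0, Dn] at this
      linarith
    calc _ ≤ ∑ k ∈ range n, (D i (k+1) ^ 2 + D i k ^ 2) := by
          refine Finset.sum_le_sum fun k _ => ?_
          nlinarith [mul_nonneg_of_nonpos_of_nonpos (hneg i (k+1)) (hneg i k)]
      _ = _ := by rw [Finset.sum_add_distrib, s1]; ring
  have c4 : ∀ k, ∑ i, D i k ^ 2 ≤ (∑ i, D i k) ^ 2 := by
    intro k
    have := Finset.sum_sq_le_sq_sum_of_nonneg (s := (univ : Finset (Fin r)))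
      (f := fun i => - D i k) (fun i _ => neg_nonneg.2 (hneg i k))
    simpa using this
  have c5 := wirt (fun k => ∑ i, D i k) n (by simp [D0]) (by simp [Dn])
  rw [c2]
  calc _ ≤ ∑ i, 2 * ∑ k ∈ range n, D i k ^ 2 := Finset.sum_le_sum fun i _ => c3 i
    _ = 2 * ∑ k ∈ range n, ∑ i, D i k ^ 2 := by rw [← Finset.mul_sum, Finset.sum_comm]
    _ ≤ 2 * ∑ k ∈ range n, (∑ i, D i k) ^ 2 := by
        gcongr with k _
        exact c4 k
    _ ≤ _ := by linarith

lemma topo {V : Type*} [Fintype V] (R : V → V → Prop) (h : ∀ v, ¬ Relation.TransGen R v v) :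
    ∃ e : Fin (Fintype.card V) ≃ V, ∀ v u, R v u → e.symm v < e.symm u := by
  classical
  have hpo : IsPartialOrder V (Relation.ReflTransGen R) :=
    { refl := fun a => Relation.ReflTransGen.refl
      trans := fun a b c => Relation.ReflTransGen.trans
      antisymm := by
        intro a b hab hba
        rcases Relation.reflTransGen_iff_eq_or_transGen.1 hab with h1 | h1
        · exact h1.symm
        · exact absurd (h1.trans_left hba) (h a) }
  obtain ⟨s, hs, hle⟩ := extend_partialOrder (Relation.ReflTransGen R)
  let _ : LinearOrder V :=
    { le := s
      le_refl := hs.toIsPartialOrder.toIsPreorder.refl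
      le_trans := hs.toIsPartialOrder.toIsPreorder.trans
      le_antisymm := hs.toIsPartialOrder.antisymm
      le_total := hs.total
      toDecidableLE := Classical.decRel _ }
  let o := Fintype.orderIsoFinOfCardEq V rfl
  refine ⟨o.toEquiv, fun v u hvu => ?_⟩
  have h1 : v ≤ u := hle _ _ (Relation.ReflTransGen.single hvu)
  have h2 : v ≠ u := by
    rintro rfl
    exact h v (Relation.TransGen.single hvu)
  have h3 : v < u := lt_of_le_of_ne h1 h2
  exact o.symm.lt_iff_lt.2 h3

/-- exchange lemma -/
lemma exchange {V : Type*} [Fintype V] [DecidableEq V] (g : Finset V → ℝ) (hg : Submodular g)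
    (g0 : g ∅ = 0) (x z : V → ℝ) (hx : InBasePolytope g x) (hz : InBasePolytope g z)
    (L : Finset V) (hL : 0 < ∑ v ∈ L, (z v - x v)) :
    ∃ u ∈ L, ∃ v ∉ L, 0 < z u - x u ∧ z v - x v < 0 ∧
      ∀ S : Finset V, ∑ w ∈ S, z w = g S → v ∈ S → u ∈ S := by
  by_contra hcon
  push Not at hcon
  have lat : ∀ S T : Finset V, ∑ w ∈ S, z w = g S → ∑ w ∈ T, z w = g T →
      ∑ w ∈ S ∪ T, z w = g (S ∪ T) ∧ ∑ w ∈ S ∩ T, z w = g (S ∩ T) := by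
    intro S T hS hT
    have h1 := hg S T
    have h2 := Finset.sum_union_inter (s₁ := S) (s₂ := T) (f := z)
    have h3 := hz.1 (S ∪ T)
    have h4 := hz.1 (S ∩ T)
    constructor <;> linarith
  have step1 : ∀ v, v ∉ L → z v - x v < 0 → ∀ U : Finset V,
      (∀ u ∈ U, u ∈ L ∧ 0 < z u - x u) →
      ∃ S : Finset V, ∑ w ∈ S, z w = g S ∧ v ∈ S ∧ ∀ u ∈ U, u ∉ S := by
    intro v hv hv' U
    induction U using Finset.induction_on with
    | empty => intro _; exact ⟨univ, hz.2, mem_univ _, by simp⟩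
    | insert a U ha ih =>
      intro hU
      obtain ⟨S, hS, hvS, hSU⟩ := ih fun u hu => hU u (mem_insert_of_mem hu)
      obtain ⟨haL, had⟩ := hU a (mem_insert_self _ _)
      obtain ⟨T, hT, hvT, haT⟩ := hcon a haL v hv had hv'
      refine ⟨S ∩ T, (lat S T hS hT).2, mem_inter.2 ⟨hvS, hvT⟩, ?_⟩
      intro u hu hu2
      rcases mem_insert.1 hu with rfl | hu
      · exact haT (mem_inter.1 hu2).2
      · exact hSU u hu (mem_inter.1 hu2).1
  have step2 : ∀ W : Finset V, (∀ v ∈ W, v ∉ L ∧ z v - x v < 0) →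
      ∃ S : Finset V, ∑ w ∈ S, z w = g S ∧ W ⊆ S ∧ ∀ u ∈ L, 0 < z u - x u → u ∉ S := by
    intro W
    induction W using Finset.induction_on with
    | empty => intro _; exact ⟨∅, by simp [g0], by simp, by simp⟩
    | insert a W ha ih =>
      intro hW
      obtain ⟨S, hS, hWS, hSU⟩ := ih fun u hu => hW u (mem_insert_of_mem hu)
      obtain ⟨haL, had⟩ := hW a (mem_insert_self _ _)
      obtain ⟨T, hT, haT, hTU⟩ := step1 a haL had (univ.filter fun u => u ∈ L ∧ 0 < z u - x u)
        (by simp)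
      refine ⟨S ∪ T, (lat S T hS hT).1, ?_, ?_⟩
      · intro w hw
        rcases mem_insert.1 hw with rfl | hw
        · exact mem_union_right _ haT
        · exact mem_union_left _ (hWS hw)
      · intro u hu hu2 hu3
        rcases mem_union.1 hu3 with h | h
        · exact hSU u hu hu2 h
        · exact hTU u (by simp only [mem_filter, mem_univ, true_and]; exact ⟨hu, hu2⟩) h
  obtain ⟨S, hS, hWS, hSU⟩ := step2 (univ.filter fun v => v ∉ L ∧ z v - x v < 0) (by simp)
  have h1 := hx.1 S
  have h2 : ∑ v ∈ S, (z v - x v) + ∑ v ∈ L, (z v - x v) ≤ ∑ v, (z v - x v) := by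
    have e1 : ∀ T : Finset V, ∑ v ∈ T, (z v - x v) = ∑ v, if v ∈ T then (z v - x v) else 0 := by
      intro T; simp
    rw [e1 S, e1 L, ← Finset.sum_add_distrib]
    refine Finset.sum_le_sum fun v _ => ?_
    by_cases hvL : v ∈ L
    · by_cases hvS : v ∈ S
      · have := hSU v hvL
        have : ¬ (0 < z v - x v) := fun h => this h hvS
        simp only [hvL, hvS, if_true]; linarith
      · simp [hvL, hvS]
    · by_cases hvS : v ∈ S
      · simp [hvL, hvS]
      · have : ¬ (z v - x v < 0) := fun h => hvS (hWS (by
          simp only [mem_filter, mem_univ, true_and]; exact ⟨hvL, h⟩))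
        simp only [hvL, hvS, if_false]; linarith
  have h3 := hx.2
  have h4 := hz.2
  rw [Finset.sum_sub_distrib] at h2
  rw [Finset.sum_sub_distrib (s := univ)] at h2
  linarith

lemma feasible_arc {V : Type*} [Fintype V] [DecidableEq V] (g : Finset V → ℝ)
    (z : V → ℝ) (hz : InBasePolytope g z) (u v : V)
    (h : ∀ S : Finset V, ∑ w ∈ S, z w = g S → v ∈ S → u ∈ S) :
    ∃ ε > 0, InBasePolytope g (fun w => z w + ε * ((if w = v then 1 else 0) - (if w = u then 1 else 0) : ℝ)) := by
  have : ∀ U : Finset (Finset V), ∃ ε > (0:ℝ), ∀ S ∈ U, ∑ w ∈ S, z w ≠ g S →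
      ε ≤ g S - ∑ w ∈ S, z w := by
    intro U
    induction U using Finset.induction_on with
    | empty => exact ⟨1, one_pos, by simp⟩
    | insert a U ha ih =>
      obtain ⟨ε, he, hU⟩ := ih
      by_cases hA : ∑ w ∈ a, z w = g a
      · refine ⟨ε, he, fun S hS hS' => ?_⟩
        rcases mem_insert.1 hS with rfl | hS
        · exact absurd hA hS'
        · exact hU S hS hS'
      · refine ⟨min ε (g a - ∑ w ∈ a, z w), lt_min he ?_, fun S hS hS' => ?_⟩
        · have := lt_of_le_of_ne (hz.1 a) hA
          linarith
        · rcases mem_insert.1 hS with rfl | hS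
          · exact min_le_right _ _
          · exact (min_le_left _ _).trans (hU S hS hS')
  obtain ⟨ε, he, hU⟩ := this univ
  have e1 : ∀ S : Finset V, ∑ w ∈ S, (z w + ε * ((if w = v then 1 else 0) - (if w = u then 1 else 0) : ℝ))
      = ∑ w ∈ S, z w + ε * ((if v ∈ S then 1 else 0) - (if u ∈ S then 1 else 0)) := by
    intro S
    rw [Finset.sum_add_distrib, ← Finset.mul_sum, Finset.sum_sub_distrib]
    simp
  refine ⟨ε, he, ?_, ?_⟩
  · intro S
    rw [e1]
    have h1 := hz.1 S
    by_cases ht : ∑ w ∈ S, z w = g S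
    · have := h S ht
      split_ifs with a b <;> first | (exfalso; tauto) | linarith
    · have := hU S (mem_univ _) ht
      split_ifs <;> linarith
  · rw [e1]
    simpa using hz.2

lemma base_convex {V : Type*} [Fintype V] (g : Finset V → ℝ) (x y : V → ℝ)
    (hx : InBasePolytope g x) (hy : InBasePolytope g y) (a b : ℝ) (ha : 0 ≤ a) (hb : 0 ≤ b)
    (hab : a + b = 1) : InBasePolytope g (fun v => a * x v + b * y v) := by
  have e : ∀ S : Finset V, ∑ v ∈ S, (a * x v + b * y v) = a * ∑ v ∈ S, x v + b * ∑ v ∈ S, y v := by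
    intro S; rw [Finset.sum_add_distrib, Finset.mul_sum, Finset.mul_sum]
  constructor
  · intro S
    rw [e]
    have h1 := mul_le_mul_of_nonneg_left (hx.1 S) ha
    have h2 := mul_le_mul_of_nonneg_left (hy.1 S) hb
    have : a * g S + b * g S = g S := by rw [← add_mul, hab, one_mul]
    linarith
  · rw [e, hx.2, hy.2, ← add_mul, hab, one_mul]

lemma norm2_eq {ι : Type*} [Fintype ι] (x : ι → ℝ) : norm2 x = ‖WithLp.toLp 2 x‖ := by
  simp [norm2, EuclideanSpace.norm_eq]

lemma exists_proj {ι : Type*} [Fintype ι] (K : Set (ι → ℝ)) (hK : IsClosed K) (hne : K.Nonempty)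
    (y : ι → ℝ) : ∃ z ∈ K, ∀ w ∈ K, ∑ i, (y i - z i) ^ 2 ≤ ∑ i, (y i - w i) ^ 2 := by
  have hc : IsClosed ((fun x : EuclideanSpace ℝ ι => (WithLp.ofLp x)) ⁻¹' K) :=
    hK.preimage (PiLp.continuous_ofLp 2 _)
  obtain ⟨z0, hz0⟩ := hne
  obtain ⟨z, hz, hmin⟩ := hc.exists_infDist_eq_dist ⟨WithLp.toLp 2 z0, by simpa using hz0⟩
    (WithLp.toLp 2 y)
  refine ⟨WithLp.ofLp z, hz, fun w hw => ?_⟩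
  have h1 := Metric.infDist_le_dist_of_mem (x := WithLp.toLp 2 y)
    (show WithLp.toLp 2 w ∈ ((fun x : EuclideanSpace ℝ ι => (WithLp.ofLp x)) ⁻¹' K) by simpa using hw)
  rw [hmin, EuclideanSpace.dist_eq, EuclideanSpace.dist_eq] at h1
  have h2 := (Real.sqrt_le_sqrt_iff (Finset.sum_nonneg fun _ _ => sq_nonneg _)).1 h1
  simpa [Real.dist_eq, sq_abs] using h2

lemma core {V : Type*} [Fintype V] [DecidableEq V] (r : ℕ)
    (f : Fin r → Finset V → ℝ)
    (hsub : ∀ i, Submodular (f i)) (h0 : ∀ i, f i ∅ = 0)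
    (s : V → ℝ) (E : Set (Fin r × V → ℝ))
    (hE : E = {y | (∀ i, InBasePolytope (f i) (fun v => y (i, v))) ∧
      ∀ v, ∑ i, y (i, v) = s v}) (hne : E.Nonempty)
    (x : Fin r × V → ℝ) (hx : ∀ i, InBasePolytope (f i) (fun v => x (i, v))) :
    ∃ z ∈ E, ∑ p, (x p - z p) ^ 2 ≤
      (Fintype.card V : ℝ) ^ 2 / 4 * ∑ v, (∑ i, x (i, v) - s v) ^ 2 := by
  have hcl : IsClosed E := by
    rw [hE]
    simp only [InBasePolytope, Set.setOf_and, Set.setOf_forall]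
    refine IsClosed.inter (isClosed_iInter fun i => IsClosed.inter
      (isClosed_iInter fun S => isClosed_le (by fun_prop) (by fun_prop))
      (isClosed_eq (by fun_prop) (by fun_prop)))
      (isClosed_iInter fun v => isClosed_eq (by fun_prop) (by fun_prop))
  obtain ⟨z, hz, hmin⟩ := exists_proj E hcl hne x
  refine ⟨z, hz, ?_⟩
  have hz' := hz
  rw [hE] at hz'
  obtain ⟨hzP, hzA⟩ := hz'
  let R : V → V → Prop := fun v u => ∃ i, 0 < z (i,u) - x (i,u) ∧ z (i,v) - x (i,v) < 0 ∧
      ∀ S : Finset V, ∑ w ∈ S, z (i,w) = f i S → v ∈ S → u ∈ S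
  -- directions
  have dir1 : ∀ v u, R v u → ∃ g : Fin r × V → ℝ,
      (∃ ε > 0, ∀ i, InBasePolytope (f i) (fun w => z (i,w) + ε * g (i,w))) ∧
      (∀ w, ∑ i, g (i,w) = ((if w = v then 1 else 0) - (if w = u then 1 else 0) : ℝ)) ∧
      ∑ p, (z p - x p) * g p < 0 := by
    rintro v u ⟨i, hu, hv, hS⟩
    obtain ⟨ε, he, hB⟩ := feasible_arc (f i) (fun w => z (i,w)) (hzP i) u v hS
    refine ⟨fun p => if p.1 = i then ((if p.2 = v then 1 else 0) - (if p.2 = u then 1 else 0) : ℝ) else 0,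
      ⟨ε, he, ?_⟩, ?_, ?_⟩
    · intro j
      by_cases hj : j = i
      · subst hj; simpa using hB
      · simpa [hj] using hzP j
    · intro w; simp
    · rw [Fintype.sum_prod_type]
      rw [Finset.sum_eq_single i]
      · simp only [if_true, mul_sub, Finset.sum_sub_distrib]
        simp
        linarith
      · intro j _ hj; simp [hj]
      · simp
  have dir : ∀ v u, Relation.TransGen R v u → ∃ g : Fin r × V → ℝ,
      (∃ ε > 0, ∀ i, InBasePolytope (f i) (fun w => z (i,w) + ε * g (i,w))) ∧
      (∀ w, ∑ i, g (i,w) = ((if w = v then 1 else 0) - (if w = u then 1 else 0) : ℝ)) ∧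
      ∑ p, (z p - x p) * g p < 0 := by
    intro v u h
    induction h with
    | single h => exact dir1 _ _ h
    | tail _ h ih =>
      obtain ⟨g1, ⟨ε1, he1, hB1⟩, hA1, hd1⟩ := ih
      obtain ⟨g2, ⟨ε2, he2, hB2⟩, hA2, hd2⟩ := dir1 _ _ h
      refine ⟨fun p => g1 p + g2 p, ⟨ε1 * ε2 / (ε1 + ε2), by positivity, ?_⟩, ?_, ?_⟩
      · intro i
        have := base_convex (f i) _ _ (hB1 i) (hB2 i) (ε2 / (ε1 + ε2)) (ε1 / (ε1 + ε2))
          (by positivity) (by positivity) (by field_simp; ring)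
        convert this using 2 with w
        field_simp
        ring
      · intro w
        rw [Finset.sum_add_distrib, hA1, hA2]; ring
      · simp only [mul_add, Finset.sum_add_distrib]; linarith
  have acyc : ∀ v, ¬ Relation.TransGen R v v := by
    intro v hv
    obtain ⟨g, ⟨ε, he, hB⟩, hA, hd⟩ := dir v v hv
    -- for all t in [0,1], z + t ε g in E
    set c := ∑ p, (z p - x p) * g p with hc
    set G := ∑ p, g p ^ 2 with hG
    have hG0 : 0 ≤ G := Finset.sum_nonneg fun _ _ => sq_nonneg _
    have ht : ∀ t : ℝ, 0 ≤ t → t ≤ 1 → 0 ≤ 2 * (t * ε) * c + (t * ε) ^ 2 * G := by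
      intro t ht0 ht1
      have hmem : (fun p => z p + (t * ε) * g p) ∈ E := by
        rw [hE]
        refine ⟨fun i => ?_, fun w => ?_⟩
        · have := base_convex (f i) _ _ (hzP i) (hB i) (1 - t) t (by linarith) ht0 (by ring)
          convert this using 2 with w
          ring
        · simp only [Finset.sum_add_distrib, ← Finset.mul_sum, hA, hzA]; ring
      have := hmin _ hmem
      have e : ∑ p, (x p - (z p + (t * ε) * g p)) ^ 2 =
          ∑ p, (x p - z p) ^ 2 + (2 * (t * ε) * c + (t * ε) ^ 2 * G) := by
        rw [hc, hG, Finset.mul_sum, Finset.mul_sum, ← Finset.sum_add_distrib,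
          ← Finset.sum_add_distrib]
        refine Finset.sum_congr rfl fun p _ => ?_
        ring
      rw [e] at this
      linarith
    -- choose t = min 1 (-c / (ε (G+1)))
    set t := min 1 (-c / (ε * (G + 1))) with htd
    have tp : 0 < t := lt_min one_pos (by apply div_pos; linarith; positivity)
    have h1 := ht t tp.le (min_le_left _ _)
    have h2 : t * (ε * (G+1)) ≤ -c := by
      rw [← le_div_iff₀ (by positivity)]
      exact min_le_right _ _
    have h3 : 0 < t * ε := mul_pos tp he
    have h4 : t * ε * (2 * c + t * ε * G) < 0 := by
      apply mul_neg_of_pos_of_neg h3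
      nlinarith
    nlinarith
  obtain ⟨e, heR⟩ := topo R acyc
  have hb := order_bound e (fun i v => z (i,v) - x (i,v))
    (by intro i; rw [Finset.sum_sub_distrib, (hzP i).2, (hx i).2, sub_self])
    (by
      intro i j
      by_contra hcon
      push Not at hcon
      obtain ⟨u, hu, v, hv, h1, h2, h3⟩ := exchange (f i) (hsub i) (h0 i) (fun v => x (i,v))
        (fun v => z (i,v)) (hx i) (hzP i) _ hcon
      have h4 := heR v u ⟨i, h1, h2, h3⟩
      simp only [mem_filter, mem_univ, true_and] at hu hv
      have h5 : (e.symm v : ℕ) < e.symm u := h4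
      omega)
  have e1 : ∑ p, (x p - z p) ^ 2 = ∑ i, ∑ v, (z (i,v) - x (i,v)) ^ 2 := by
    rw [Fintype.sum_prod_type]
    exact Finset.sum_congr rfl fun i _ => Finset.sum_congr rfl fun v _ => by ring
  have e2 : ∑ v, (∑ i, x (i, v) - s v) ^ 2 = ∑ v, (∑ i, (z (i,v) - x (i,v))) ^ 2 := by
    refine Finset.sum_congr rfl fun v _ => ?_
    rw [Finset.sum_sub_distrib, hzA]; ring
  rw [e1, e2]
  exact hb

lemma core2 {V : Type*} [Fintype V] [DecidableEq V] (r : ℕ)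
    (f : Fin r → Finset V → ℝ)
    (hsub : ∀ i, Submodular (f i)) (h0 : ∀ i, f i ∅ = 0)
    (s : V → ℝ) (E : Set (Fin r × V → ℝ))
    (hE : E = {y | (∀ i, InBasePolytope (f i) (fun v => y (i, v))) ∧
      ∀ v, ∑ i, y (i, v) = s v}) (hne : E.Nonempty)
    (x : Fin r × V → ℝ) (hx : ∀ i, InBasePolytope (f i) (fun v => x (i, v))) :
    ∃ z ∈ E, ∀ a : Fin r × V → ℝ, (∀ v, ∑ i, a (i, v) = s v) →
      norm2 (x - z) ≤ (Fintype.card V : ℝ) * Real.sqrt r / 2 * norm2 (x - a) := by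
  obtain ⟨z, hz, hb⟩ := core r f hsub h0 s E hE hne x hx
  refine ⟨z, hz, fun a ha => ?_⟩
  have h1 : ∑ v, (∑ i, x (i, v) - s v) ^ 2 ≤ r * ∑ p, (x p - a p) ^ 2 := by
    rw [Fintype.sum_prod_type_right, Finset.mul_sum]
    refine Finset.sum_le_sum fun v _ => ?_
    rw [← ha v, ← Finset.sum_sub_distrib]
    simpa using sq_sum_le_card_mul_sum_sq (s := (univ : Finset (Fin r)))
      (f := fun i => x (i,v) - a (i,v))
  have hn : 0 ≤ ∑ p, (x p - a p) ^ 2 := Finset.sum_nonneg fun _ _ => sq_nonneg _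
  have h2 : ∑ p, (x p - z p) ^ 2 ≤
      (Fintype.card V : ℝ) ^ 2 / 4 * (r * ∑ p, (x p - a p) ^ 2) :=
    hb.trans (by gcongr)
  simp only [norm2, Pi.sub_apply]
  apply Real.sqrt_le_iff.2 ⟨by positivity, h2.trans (le_of_eq ?_)⟩
  rw [mul_pow, div_pow, mul_pow, Real.sq_sqrt hn, Real.sq_sqrt (Nat.cast_nonneg r)]
  ring

lemma distSet_le {ι : Type*} [Fintype ι] (y z : ι → ℝ) (K : Set (ι → ℝ)) (hz : z ∈ K) :
    distSet y K ≤ norm2 (y - z) :=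
  csInf_le ⟨0, by rintro _ ⟨w, _, rfl⟩; exact Real.sqrt_nonneg _⟩ ⟨z, hz, rfl⟩

lemma distSet_nonneg {ι : Type*} [Fintype ι] (y : ι → ℝ) (K : Set (ι → ℝ)) :
    0 ≤ distSet y K :=
  Real.sInf_nonneg (by rintro _ ⟨w, _, rfl⟩; exact Real.sqrt_nonneg _)

lemma le_mul_distSet {ι : Type*} [Fintype ι] (y : ι → ℝ) (K : Set (ι → ℝ)) (hK : K.Nonempty)
    (b c : ℝ) (hc : 0 ≤ c) (h : ∀ a ∈ K, b ≤ c * norm2 (y - a)) : b ≤ c * distSet y K := by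
  rcases hc.eq_or_lt with rfl | hc
  · obtain ⟨a, ha⟩ := hK
    simpa using h a ha
  · rw [← div_le_iff₀' hc]
    refine le_csInf (hK.image _) ?_
    rintro _ ⟨a, ha, rfl⟩
    rw [div_le_iff₀' hc]
    exact h a ha

/-- Theorem 4.1, bound on `κ*`: for every `y ∈ (𝒫 ∪ 𝒜') \ E`,
`d(y, E) ≤ (n√r/2 + 1) · max{d(y, 𝒫), d(y, 𝒜')}`, and consequently
`κ* ≤ n√r/2 + 1`. -/
theorem kappa_star_bound
    {V : Type*} [Fintype V] [DecidableEq V] (r : ℕ)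
    (f : Fin r → Finset V → ℝ)
    (hsub : ∀ i, Submodular (f i)) (h0 : ∀ i, f i ∅ = 0)
    (sstar : V → ℝ)
    (hsB : InBasePolytope (fun S => ∑ i, f i S) sstar)
    (hsMin : ∀ z : V → ℝ, InBasePolytope (fun S => ∑ i, f i S) z →
      ∑ v, sstar v ^ 2 ≤ ∑ v, z v ^ 2)
    (P A' E : Set (Fin r × V → ℝ))
    (hP : P = {y | ∀ i, InBasePolytope (f i) (fun v => y (i, v))})
    (hA' : A' = {a | ∀ v, ∑ i, a (i, v) = sstar v})
    (hE : E = {y ∈ P | ∀ v, ∑ i, y (i, v) = sstar v}) :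
    (∀ y ∈ (P ∪ A') \ E,
      distSet y E ≤ ((Fintype.card V : ℝ) * Real.sqrt r / 2 + 1) *
        max (distSet y P) (distSet y A')) ∧
    sSup {κ : ℝ | ∃ y ∈ (P ∪ A') \ E,
        κ = distSet y E / max (distSet y P) (distSet y A')} ≤
      (Fintype.card V : ℝ) * Real.sqrt r / 2 + 1 := by
  have hE' : E = {y | (∀ i, InBasePolytope (f i) (fun v => y (i, v))) ∧
      ∀ v, ∑ i, y (i, v) = sstar v} := by rw [hE, hP]; rfl
  have hc : 0 ≤ (Fintype.card V : ℝ) * Real.sqrt r / 2 := by positivity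
  have main : ∀ y ∈ (P ∪ A') \ E,
      distSet y E ≤ ((Fintype.card V : ℝ) * Real.sqrt r / 2 + 1) *
        max (distSet y P) (distSet y A') := by
    intro y hy
    have hm : 0 ≤ max (distSet y P) (distSet y A') := le_max_of_le_left (distSet_nonneg _ _)
    rcases E.eq_empty_or_nonempty with h | hne
    · have : distSet y E = 0 := by simp [distSet, h]
      rw [this]; positivity
    have hPn : P.Nonempty := by
      obtain ⟨z, hz⟩ := hne; rw [hE] at hz; exact ⟨z, hz.1⟩
    have hAn : A'.Nonempty := by
      obtain ⟨z, hz⟩ := hne; rw [hE] at hz; rw [hA']; exact ⟨z, hz.2⟩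
    rcases hy.1 with hyP | hyA
    · obtain ⟨z, hz, hb⟩ := core2 r f hsub h0 sstar E hE' hne y (by rw [hP] at hyP; exact hyP)
      have h1 := le_mul_distSet y A' hAn _ _ hc
        (fun a ha => hb a (by rw [hA'] at ha; exact ha))
      have h2 := distSet_le y z E hz
      have h3 := mul_le_mul_of_nonneg_left (le_max_right (distSet y P) (distSet y A')) hc
      linarith
    · have hc1 : 0 ≤ (Fintype.card V : ℝ) * Real.sqrt r / 2 + 1 := by positivity
      have h1 : distSet y E ≤ ((Fintype.card V : ℝ) * Real.sqrt r / 2 + 1) * distSet y P := by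
        refine le_mul_distSet y P hPn _ _ hc1 fun p hp => ?_
        obtain ⟨z, hz, hb⟩ := core2 r f hsub h0 sstar E hE' hne p (by rw [hP] at hp; exact hp)
        have h2 := distSet_le y z E hz
        have h3 := hb y (by rw [hA'] at hyA; exact hyA)
        have h4 : norm2 (y - z) ≤ norm2 (y - p) + norm2 (p - z) := by
          simp only [norm2_eq, WithLp.toLp_sub]
          exact norm_sub_le_norm_sub_add_norm_sub _ _ _
        have h5 : norm2 (p - y) = norm2 (y - p) := by
          simp only [norm2_eq, WithLp.toLp_sub]
          exact norm_sub_rev _ _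
        rw [h5] at h3
        linarith
      exact h1.trans (mul_le_mul_of_nonneg_left (le_max_left _ _) hc1)
  refine ⟨main, Real.sSup_le ?_ (by positivity)⟩
  rintro κ ⟨y, hy, rfl⟩
  exact div_le_of_le_mul₀ (le_max_of_le_left (distSet_nonneg _ _)) (by positivity) (main y hy)
end

section
/- Let f_1, …, f_r : 2^V → ℝ be submodular with f_i(∅) = 0, suppose each f_i has effective support C_i (i.e., f_i(S) = f_i(S ∩ C_i) for all S ⊆ V), and let f = Σ_{i=1}^r f_i. Then for every x ∈ B(f) there exist x_1, …, x_r with x_i ∈ B(f_i), supp(x_i) ⊆ C_i for each i, and x = Σ_{i=1}^r x_i. -/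
open Finset

section Greedy

variable {V : Type*} [Fintype V] [DecidableEq V] {K : Type*} [LinearOrder K]

/-- The greedy vector of `g` along the ranking `k`. -/
def greedyVec (k : V → K) (g : Finset V → ℝ) (v : V) : ℝ :=
  g (univ.filter fun u => k u ≤ k v) - g (univ.filter fun u => k u < k v)

theorem greedy_le (k : V → K) (hk : Function.Injective k) (g : Finset V → ℝ)
    (hg : Submodular g) (hg0 : g ∅ = 0) (T : Finset V) :
    ∑ v ∈ T, greedyVec k g v ≤ g T := by
  induction T using Finset.induction_on_max_value k with
  | empty => simp [hg0]
  | insert a s ha hmax ih =>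
    rw [Finset.sum_insert ha]
    have hlt : ∀ u ∈ s, k u < k a := fun u hu =>
      lt_of_le_of_ne (hmax u hu) (fun h => ha (hk h ▸ hu))
    have h := hg (insert a s) (univ.filter fun u => k u < k a)
    have h1 : insert a s ∪ (univ.filter fun u => k u < k a) = univ.filter fun u => k u ≤ k a := by
      ext u
      simp only [mem_union, mem_insert, mem_filter, mem_univ, true_and]
      constructor
      · rintro ((rfl | h) | h)
        · exact le_rfl
        · exact hmax u h
        · exact h.le
      · intro h
        rcases h.lt_or_eq with h | h
        · exact Or.inr h
        · exact Or.inl (Or.inl (hk h))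
    have h2 : insert a s ∩ (univ.filter fun u => k u < k a) = s := by
      ext u
      simp only [mem_inter, mem_insert, mem_filter, mem_univ, true_and]
      constructor
      · rintro ⟨rfl | h, h'⟩
        · exact absurd h' (lt_irrefl _)
        · exact h
      · intro h
        exact ⟨Or.inr h, hlt u h⟩
    rw [h1, h2] at h
    unfold greedyVec at ih ⊢
    linarith

theorem greedy_eq (k : V → K) (hk : Function.Injective k) (g : Finset V → ℝ)
    (hg0 : g ∅ = 0) (T : Finset V) (hT : ∀ v ∈ T, ∀ u, k u < k v → u ∈ T) :
    ∑ v ∈ T, greedyVec k g v = g T := by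
  induction T using Finset.induction_on_max_value k with
  | empty => simp [hg0]
  | insert a s ha hmax ih =>
    rw [Finset.sum_insert ha]
    have hlt : ∀ u ∈ s, k u < k a := fun u hu =>
      lt_of_le_of_ne (hmax u hu) (fun h => ha (hk h ▸ hu))
    have h2 : (univ.filter fun u => k u < k a) = s := by
      ext u
      simp only [mem_filter, mem_univ, true_and]
      constructor
      · intro h
        rcases mem_insert.1 (hT a (mem_insert_self _ _) u h) with rfl | h'
        · exact absurd h (lt_irrefl _)
        · exact h'
      · exact hlt u
    have h1 : (univ.filter fun u => k u ≤ k a) = insert a s := by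
      ext u
      rw [← h2]
      simp only [mem_insert, mem_filter, mem_univ, true_and, le_iff_lt_or_eq, hk.eq_iff]
      tauto
    rw [ih]
    · unfold greedyVec
      rw [h1, h2]; ring
    · intro v hv u hu
      rw [← h2]
      simpa using hu.trans (hlt v hv)

theorem abel_lower (k : V → K) (hk : Function.Injective k) (w z : V → ℝ)
    (hw : ∀ u v, k u < k v → w v ≤ w u)
    (hz : ∀ T : Finset V, (∀ v ∈ T, ∀ u, k u < k v → u ∈ T) → 0 ≤ ∑ v ∈ T, z v)
    (T : Finset V) (hT : ∀ v ∈ T, ∀ u, k u < k v → u ∈ T) (c : ℝ) (hc : ∀ v ∈ T, c ≤ w v) :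
    c * ∑ v ∈ T, z v ≤ ∑ v ∈ T, w v * z v := by
  induction T using Finset.induction_on_max_value k generalizing c with
  | empty => simp
  | insert a s ha hmax ih =>
    have hlt : ∀ u ∈ s, k u < k a := fun u hu =>
      lt_of_le_of_ne (hmax u hu) (fun h => ha (hk h ▸ hu))
    have h3 := hz _ hT
    have h4 := ih (by
      intro v hv u hu
      rcases mem_insert.1 (hT v (mem_insert_of_mem hv) u hu) with rfl | h'
      · exact absurd (hu.trans (hlt v hv)) (lt_irrefl _)
      · exact h') (w a) (fun v hv => hw _ _ (hlt v hv))
    have h5 := mul_le_mul_of_nonneg_right (hc a (mem_insert_self _ _)) h3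
    rw [Finset.sum_insert ha] at h5 ⊢
    rw [Finset.sum_insert ha]
    linarith

theorem exists_greedy {r : ℕ} (f : Fin r → Finset V → ℝ)
    (hsub : ∀ i, Submodular (f i)) (h0 : ∀ i, f i ∅ = 0)
    (x : V → ℝ) (hx : InBasePolytope (fun S => ∑ i, f i S) x) (w : V → ℝ) :
    ∃ y : Fin r → V → ℝ, (∀ i, InBasePolytope (f i) (y i)) ∧
      ∑ v, w v * x v ≤ ∑ v, w v * (∑ i, y i) v := by
  let k : V → ℝ ×ₗ Fin (Fintype.card V) := fun v => toLex (- w v, Fintype.equivFin V v)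
  have hk : Function.Injective k := by
    intro u v h
    have h' := congrArg (fun p => (ofLex p).2) h
    exact (Fintype.equivFin V).injective h'
  have hw : ∀ u v, k u < k v → w v ≤ w u := by
    intro u v h
    rcases (Prod.Lex.toLex_lt_toLex).1 h with h | h
    · simp only [neg_lt_neg_iff] at h; exact h.le
    · simp only [neg_inj] at h; exact h.1.ge
  refine ⟨fun i => greedyVec k (f i), fun i => ⟨greedy_le k hk _ (hsub i) (h0 i),
    greedy_eq k hk _ (h0 i) _ (by simp)⟩, ?_⟩
  have hsum : ∀ T : Finset V, (∀ v ∈ T, ∀ u, k u < k v → u ∈ T) →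
      ∑ v ∈ T, (∑ i, greedyVec k (f i)) v = ∑ i, f i T := by
    intro T hT
    simp only [Finset.sum_apply]
    rw [Finset.sum_comm]
    exact Finset.sum_congr rfl fun i _ => greedy_eq k hk _ (h0 i) _ hT
  obtain ⟨c, hc⟩ : ∃ c, ∀ v, c ≤ w v := by
    obtain ⟨c, hc⟩ := (Set.finite_range w).bddBelow
    exact ⟨c, fun v => hc ⟨v, rfl⟩⟩
  have key := abel_lower k hk w (fun v => (∑ i, greedyVec k (f i)) v - x v) hw (by
    intro T hT
    rw [Finset.sum_sub_distrib, hsum T hT]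
    have := hx.1 T
    simp only at this
    linarith) univ (by simp) c (fun v _ => hc v)
  rw [Finset.sum_sub_distrib, hsum univ (by simp), hx.2, sub_self, mul_zero] at key
  simp only [mul_sub, Finset.sum_sub_distrib] at key
  linarith

theorem isCompact_base (g : Finset V → ℝ) : IsCompact {x : V → ℝ | InBasePolytope g x} := by
  have hcl : IsClosed {x : V → ℝ | InBasePolytope g x} := by
    have : {x : V → ℝ | InBasePolytope g x} =
        (⋂ S : Finset V, {x : V → ℝ | ∑ v ∈ S, x v ≤ g S}) ∩ {x : V → ℝ | ∑ v, x v = g univ} := by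
      ext x; simp [InBasePolytope]
    rw [this]
    refine IsClosed.inter (isClosed_iInter fun S => isClosed_le (by fun_prop) (by fun_prop))
      (isClosed_eq (by fun_prop) (by fun_prop))
  refine IsCompact.of_isClosed_subset
    (isCompact_Icc (a := fun v => g univ - g (univ.erase v)) (b := fun v => g {v})) hcl ?_
  intro x hx
  refine ⟨fun v => ?_, fun v => ?_⟩
  · have h1 := hx.1 (univ.erase v)
    have h2 := hx.2
    rw [← Finset.add_sum_erase univ x (mem_univ v)] at h2
    simp only
    linarith
  · simpa using hx.1 {v}

theorem convex_base (g : Finset V → ℝ) : Convex ℝ {x : V → ℝ | InBasePolytope g x} := by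
  intro x hx y hy a b ha hb hab
  have e : ∀ S : Finset V, ∑ v ∈ S, (a • x + b • y) v = a * ∑ v ∈ S, x v + b * ∑ v ∈ S, y v := by
    intro S
    simp [Finset.sum_add_distrib, Finset.mul_sum]
  refine ⟨fun S => ?_, ?_⟩
  · rw [e]
    have h1 := mul_le_mul_of_nonneg_left (hx.1 S) ha
    have h2 := mul_le_mul_of_nonneg_left (hy.1 S) hb
    have h3 : a * g S + b * g S = g S := by rw [← add_mul, hab, one_mul]
    linarith
  · rw [e, hx.2, hy.2, ← add_mul, hab, one_mul]

end Greedy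

/-- every `x ∈ B(f)`, for `f = Σᵢ fᵢ` with effective supports `Cᵢ`,
decomposes as `x = Σᵢ xᵢ` with `xᵢ ∈ B(fᵢ)` and `supp(xᵢ) ⊆ Cᵢ`. -/
theorem base_polytope_decomposition
    {V : Type*} [Fintype V] [DecidableEq V] (r : ℕ)
    (f : Fin r → Finset V → ℝ)
    (hsub : ∀ i, Submodular (f i)) (h0 : ∀ i, f i ∅ = 0)
    (Csupp : Fin r → Finset V)
    (hCs : ∀ i (S : Finset V), f i S = f i (S ∩ Csupp i))
    (x : V → ℝ) (hx : InBasePolytope (fun S => ∑ i, f i S) x) :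
    ∃ xi : Fin r → V → ℝ,
      (∀ i, InBasePolytope (f i) (xi i)) ∧
      (∀ i, ∀ v : V, v ∉ Csupp i → xi i v = 0) ∧
      ∀ v, x v = ∑ i, xi i v := by
  let P : Set (Fin r → V → ℝ) := Set.univ.pi fun i => {y : V → ℝ | InBasePolytope (f i) y}
  let L : (Fin r → V → ℝ) →ₗ[ℝ] (V → ℝ) := ∑ i, LinearMap.proj i
  have hL : ∀ y, L y = ∑ i, y i := by intro y; simp [L]
  have hPc : IsCompact P := isCompact_univ_pi fun i => isCompact_base (f i)
  have hPv : Convex ℝ P := convex_pi fun i _ => convex_base (f i)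
  have hLc : Continuous L := L.continuous_of_finiteDimensional
  have hmem : x ∈ L '' P := by
    by_contra hn
    obtain ⟨φ, u, h1, h2⟩ := geometric_hahn_banach_closed_point (hPv.linear_image L)
      (hPc.image hLc).isClosed hn
    have hφ : ∀ z : V → ℝ, φ z = ∑ v, φ (Pi.single v 1) * z v := by
      intro z
      conv_lhs => rw [pi_eq_sum_univ' z]
      rw [map_sum]
      refine Finset.sum_congr rfl fun v _ => ?_
      rw [map_smul, smul_eq_mul, mul_comm]
    obtain ⟨y, hy, hle⟩ := exists_greedy f hsub h0 x hx (fun v => φ (Pi.single v 1))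
    rw [← hφ, ← hφ, ← hL] at hle
    have := h1 (L y) ⟨y, fun i _ => hy i, rfl⟩
    linarith
  obtain ⟨y, hy, rfl⟩ := hmem
  have hy' : ∀ i, InBasePolytope (f i) (y i) := fun i => hy i trivial
  refine ⟨y, hy', fun i v hv => ?_, fun v => by rw [hL, Finset.sum_apply]⟩
  have ha := (hy' i).1 {v}
  have hb := (hy' i).1 (univ.erase v)
  have hc := (hy' i).2
  rw [← Finset.add_sum_erase univ (y i) (mem_univ v)] at hc
  rw [hCs, Finset.singleton_inter_of_notMem hv, h0, Finset.sum_singleton] at ha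
  have e : univ.erase v ∩ Csupp i = univ ∩ Csupp i := by
    ext u
    simp only [mem_inter, mem_erase, mem_univ, and_true, true_and, and_iff_right_iff_imp]
    rintro h rfl
    exact hv h
  rw [hCs, e, ← hCs] at hb
  linarith
end
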